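/- arXiv:2407.13955 — 8 statements merged into one kernel-verified Lean document; each statement's English description precedes it below -/
import Mathlib

section
/- Let σ : ℰ → ℂ and q : ℐ → ℂ. If the matrix (L_σ)_ℐℐ + diag(q) is invertible, then for every f : ℬ → ℂ there exists a unique u : 𝒱 → ℂ satisfying the discrete Schrödinger Dirichlet problem (L_σ u)_ℐ + q ⊙ u_ℐ = 0 and u_ℬ = f, and it is given by u_ℬ = f and u_ℐ = −((L_σ)_ℐℐ + diag(q))⁻¹ (L_σ)_ℐℬ f. -/
open Matrix

noncomputable section

variable {E B I : Type*} [Fintype E] [Fintype B] [Fintype I]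
  [DecidableEq E] [DecidableEq B] [DecidableEq I]

/-- Discrete gradient of an oriented graph whose edge `e` goes from node `tail e`
to node `head e`, so that `(dGrad R head tail *ᵥ u) e = u (head e) - u (tail e)`.
The node set is `𝒱 = B ⊕ I`, with boundary nodes `B` and interior nodes `I`. -/
def dGrad (R : Type*) [Ring R] (head tail : E → B ⊕ I) : Matrix E (B ⊕ I) R :=
  Matrix.of fun e v => (if v = head e then 1 else 0) - (if v = tail e then 1 else 0)

/-- The weighted graph Laplacian `L_w = ∇ᵀ diag(w) ∇`. -/
def dLap (R : Type*) [CommRing R] (head tail : E → B ⊕ I) (w : E → R) :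
    Matrix (B ⊕ I) (B ⊕ I) R :=
  (dGrad R head tail)ᵀ * Matrix.diagonal w * dGrad R head tail

/-- The restriction matrix `R_ℐ` from vectors on `𝒱 = B ⊕ I` to vectors on `I`;
its transpose extends by zero. -/
def RImat (R : Type*) [Ring R] : Matrix I (B ⊕ I) R :=
  Matrix.of fun i v => if v = Sum.inr i then 1 else 0

section

variable {R k l m n : Type*}

theorem mulVec_comp_eq_submatrix_inl_add_submatrix_inr [NonUnitalNonAssocSemiring R]
    [Fintype m] [Fintype n] (M : Matrix k (m ⊕ n) R) (r : l → k) (u : m ⊕ n → R) :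
    (M *ᵥ u) ∘ r =
      M.submatrix r Sum.inl *ᵥ (u ∘ Sum.inl) + M.submatrix r Sum.inr *ᵥ (u ∘ Sum.inr) :=
  funext fun i => Fintype.sum_sum_type fun j => M (r i) j * u j

theorem diagonal_mulVec_eq_mul [NonUnitalNonAssocSemiring R] [Fintype n] [DecidableEq n]
    (q v : n → R) : diagonal q *ᵥ v = q * v :=
  funext (mulVec_diagonal q v)

theorem mulVec_comp_inr_add_mul_comp_inr [NonUnitalNonAssocSemiring R] [Fintype m] [Fintype n]
    [DecidableEq n] (L : Matrix (m ⊕ n) (m ⊕ n) R) (q : n → R) (u : m ⊕ n → R) :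
    (L *ᵥ u) ∘ Sum.inr + q * (u ∘ Sum.inr) =
      (L.submatrix Sum.inr Sum.inr + diagonal q) *ᵥ (u ∘ Sum.inr) +
        L.submatrix Sum.inr Sum.inl *ᵥ (u ∘ Sum.inl) := by
  rw [mulVec_comp_eq_submatrix_inl_add_submatrix_inr, add_mulVec, diagonal_mulVec_eq_mul]
  abel

theorem mulVec_eq_iff_eq_inv_mulVec [CommRing R] [Fintype n] [DecidableEq n] {A : Matrix n n R}
    (hA : IsUnit A) {x b : n → R} : A *ᵥ x = b ↔ x = A⁻¹ *ᵥ b := by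
  have hdet : IsUnit A.det := A.isUnit_iff_isUnit_det.mp hA
  constructor
  · rintro rfl
    rw [mulVec_mulVec, nonsing_inv_mul A hdet, one_mulVec]
  · rintro rfl
    rw [mulVec_mulVec, mul_nonsing_inv A hdet, one_mulVec]

theorem schroedinger_dirichlet_unique_solution_general [CommRing R] [Fintype m] [Fintype n]
    [DecidableEq n] (L : Matrix (m ⊕ n) (m ⊕ n) R) (q : n → R)
    (hinv : IsUnit (L.submatrix Sum.inr Sum.inr + diagonal q)) (f : m → R) (u : m ⊕ n → R) :
    ((L *ᵥ u) ∘ Sum.inr + q * (u ∘ Sum.inr) = 0 ∧ u ∘ Sum.inl = f) ↔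
      u = Sum.elim f
        (-((L.submatrix Sum.inr Sum.inr + diagonal q)⁻¹ *ᵥ
            (L.submatrix Sum.inr Sum.inl *ᵥ f))) := by
  set A := L.submatrix Sum.inr Sum.inr + diagonal q
  set C := L.submatrix Sum.inr Sum.inl
  calc
    _ ↔ A *ᵥ (u ∘ Sum.inr) + C *ᵥ (u ∘ Sum.inl) = 0 ∧ u ∘ Sum.inl = f := by
      rw [mulVec_comp_inr_add_mul_comp_inr]
    _ ↔ A *ᵥ (u ∘ Sum.inr) + C *ᵥ f = 0 ∧ u ∘ Sum.inl = f :=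
      and_congr_left fun hf => by rw [hf]
    _ ↔ u ∘ Sum.inr = -(A⁻¹ *ᵥ (C *ᵥ f)) ∧ u ∘ Sum.inl = f := by
      rw [add_eq_zero_iff_eq_neg, mulVec_eq_iff_eq_inv_mulVec hinv, mulVec_neg]
    _ ↔ u = Sum.elim f (-(A⁻¹ *ᵥ (C *ᵥ f))) := by
      rw [and_comm, ← Sum.elim_eq_iff, Sum.elim_comp_inl_inr]

end

/-- for complex `σ : ℰ → ℂ`, `q : ℐ → ℂ`, if `(L_σ)_ℐℐ + diag(q)` is
invertible then for every `f : ℬ → ℂ` the Schrödinger Dirichlet problem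
`(L_σ u)_ℐ + q ⊙ u_ℐ = 0`, `u_ℬ = f` has `u` as a solution iff `u_ℬ = f` and
`u_ℐ = -((L_σ)_ℐℐ + diag(q))⁻¹ (L_σ)_ℐℬ f`; in particular a unique solution exists
and is given by this formula. -/
theorem schroedinger_dirichlet_unique_solution
    (head tail : E → B ⊕ I) (hloop : ∀ e, head e ≠ tail e) (σ : E → ℂ) (q : I → ℂ)
    (hinv : IsUnit ((dLap ℂ head tail σ).submatrix Sum.inr Sum.inr + Matrix.diagonal q)) :
    ∀ f : B → ℂ, ∀ u : B ⊕ I → ℂ,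
      (((dLap ℂ head tail σ *ᵥ u) ∘ Sum.inr + (fun i => q i * u (Sum.inr i)) = 0 ∧
          u ∘ Sum.inl = f) ↔
        u = Sum.elim f
          (-(((dLap ℂ head tail σ).submatrix Sum.inr Sum.inr + Matrix.diagonal q)⁻¹ *ᵥ
              ((dLap ℂ head tail σ).submatrix Sum.inr Sum.inl *ᵥ f)))) :=
  schroedinger_dirichlet_unique_solution_general (dLap ℂ head tail σ) q hinv
end
end

section
/- Let (Ω, μ) be a probability space and let J : Ω → (ℰ → ℝ) be a square-integrable random vector of edge currents with zero mean, ∫ J dμ = 0, and covariance ∫ J(e) J(e') dμ = (κ/π) δ_{e,e'} T(e) σ(e) for all e, e' ∈ ℰ, where T : ℰ → (0,∞) is a temperature function and κ > 0 is a constant. Assume (L_σ)_ℐℐ is invertible, and define the random boundary current g := (L_σ)_ℬℐ ((L_σ)_ℐℐ)⁻¹ R_ℐ ∇ᵀ J (which equals (L_σ u)_ℬ for the grounded solution u of the random current conservation problem). Then ∫ g dμ = 0 and ∫ g gᵀ dμ = (κ/π) (L_σ)_ℬℐ ((L_σ)_ℐℐ)⁻¹ R_ℐ ∇ᵀ diag(T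 ⊙ σ) ∇ R_ℐᵀ ((L_σ)_ℐℐ)⁻¹ (L_σ)_ℐℬ. -/
open Matrix

noncomputable section

variable {E B I : Type*} [Fintype E] [Fintype B] [Fintype I]
  [DecidableEq E] [DecidableEq B] [DecidableEq I]

open MeasureTheory

/-- The matrix `(L_σ)_ℬℐ ((L_σ)_ℐℐ)⁻¹ R_ℐ ∇ᵀ` taking an edge current `j` to the boundary current
`(L_σ u)_ℬ` of the grounded solution `u` of the current conservation problem with source `j`.
It inherits the convention that `((L_σ)_ℐℐ)⁻¹` is `0` when `(L_σ)_ℐℐ` is not invertible. -/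
def boundaryCurrentMatrix (R : Type*) [CommRing R] (head tail : E → B ⊕ I) (σ : E → R) :
    Matrix B E R :=
  (dLap R head tail σ).submatrix Sum.inl Sum.inr *
    ((dLap R head tail σ).submatrix Sum.inr Sum.inr)⁻¹ *
    (RImat R : Matrix I (B ⊕ I) R) * (dGrad R head tail)ᵀ

theorem isSymm_transpose_mul_diagonal_mul {m n R : Type*} [Fintype m] [DecidableEq m]
    [CommSemiring R] (A : Matrix m n R) (d : m → R) : (Aᵀ * diagonal d * A).IsSymm := by
  simp only [Matrix.IsSymm, transpose_mul, transpose_transpose, diagonal_transpose,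
    Matrix.mul_assoc]

section BoundaryCurrentMatrix

variable {R : Type*} [CommRing R] (head tail : E → B ⊕ I) (σ : E → R)

theorem boundaryCurrentMatrix_mulVec (j : E → R) :
    boundaryCurrentMatrix R head tail σ *ᵥ j =
      (dLap R head tail σ).submatrix Sum.inl Sum.inr *ᵥ
        (((dLap R head tail σ).submatrix Sum.inr Sum.inr)⁻¹ *ᵥ
          (RImat R *ᵥ ((dGrad R head tail)ᵀ *ᵥ j))) := by
  simp only [boundaryCurrentMatrix, mulVec_mulVec, Matrix.mul_assoc]

theorem transpose_boundaryCurrentMatrix :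
    (boundaryCurrentMatrix R head tail σ)ᵀ =
      dGrad R head tail * (RImat R : Matrix I (B ⊕ I) R)ᵀ *
        ((dLap R head tail σ).submatrix Sum.inr Sum.inr)⁻¹ *
        (dLap R head tail σ).submatrix Sum.inr Sum.inl := by
  have hL : (dLap R head tail σ).IsSymm :=
    isSymm_transpose_mul_diagonal_mul (dGrad R head tail) σ
  simp only [boundaryCurrentMatrix, transpose_mul, transpose_transpose, transpose_nonsing_inv,
    transpose_submatrix, hL.eq, Matrix.mul_assoc]

end BoundaryCurrentMatrix

section Moments

variable {m n p q Ω 𝕜 : Type*} [Fintype n] [RCLike 𝕜] [MeasurableSpace Ω] {μ : Measure Ω}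

theorem integral_mulVec_apply (M : Matrix m n 𝕜) {X : Ω → n → 𝕜}
    (hX : ∀ k, Integrable (fun ω => X ω k) μ) (i : m) :
    ∫ ω, (M *ᵥ X ω) i ∂μ = (M *ᵥ fun k => ∫ ω, X ω k ∂μ) i := by
  simp only [mulVec, dotProduct]
  rw [integral_finsetSum _ fun k _ => (hX k).const_mul (M i k)]
  simp only [integral_const_mul]

theorem integral_mulVec_mul_mulVec_apply [Fintype q] (M : Matrix m n 𝕜) (N : Matrix p q 𝕜)
    {X : Ω → n → 𝕜} {Y : Ω → q → 𝕜}
    (hXY : ∀ k l, Integrable (fun ω => X ω k * Y ω l) μ) (i : m) (j : p) :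
    ∫ ω, (M *ᵥ X ω) i * (N *ᵥ Y ω) j ∂μ =
      (M * Matrix.of (fun k l => ∫ ω, X ω k * Y ω l ∂μ) * Nᵀ) i j := by
  have hterm (k : n) (l : q) : Integrable (fun ω => M i k * N j l * (X ω k * Y ω l)) μ :=
    (hXY k l).const_mul _
  calc ∫ ω, (M *ᵥ X ω) i * (N *ᵥ Y ω) j ∂μ
      = ∫ ω, ∑ k, ∑ l, M i k * N j l * (X ω k * Y ω l) ∂μ := by
        simp only [mulVec, dotProduct, Finset.sum_mul_sum, mul_mul_mul_comm]
    _ = ∑ k, ∑ l, M i k * N j l * ∫ ω, X ω k * Y ω l ∂μ := by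
        rw [integral_finsetSum _ fun k _ => integrable_finsetSum _ fun l _ => hterm k l]
        simp only [integral_finsetSum _ fun l _ => hterm _ l, integral_const_mul]
    _ = (M * Matrix.of (fun k l => ∫ ω, X ω k * Y ω l ∂μ) * Nᵀ) i j := by
        simp only [mul_apply, of_apply, transpose_apply, Finset.sum_mul]
        rw [Finset.sum_comm]
        simp only [mul_right_comm]

end Moments

-- Over `ℂ` the second moments carry no conjugation because `L_σ` is symmetric, not Hermitian.
theorem boundary_current_mean_and_covariance_general {𝕜 : Type*} [RCLike 𝕜]
    (head tail : E → B ⊕ I) (σ : E → 𝕜)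
    {Ω : Type*} [MeasurableSpace Ω] (μ : Measure Ω) [IsFiniteMeasure μ]
    (J : Ω → E → 𝕜) (m : E → 𝕜) (C : Matrix E E 𝕜)
    (hL2 : ∀ e, MemLp (fun ω => J ω e) 2 μ)
    (hmean : ∀ e, ∫ ω, J ω e ∂μ = m e)
    (hmoment : ∀ e e', ∫ ω, J ω e * J ω e' ∂μ = C e e')
    (hinv : IsUnit ((dLap 𝕜 head tail σ).submatrix Sum.inr Sum.inr))
    (g : Ω → B → 𝕜)
    (hg : ∀ ω, g ω = (dLap 𝕜 head tail σ).submatrix Sum.inl Sum.inr *ᵥ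
      (((dLap 𝕜 head tail σ).submatrix Sum.inr Sum.inr)⁻¹ *ᵥ
        (RImat 𝕜 *ᵥ ((dGrad 𝕜 head tail)ᵀ *ᵥ J ω)))) :
    (∀ b, ∫ ω, g ω b ∂μ = (boundaryCurrentMatrix 𝕜 head tail σ *ᵥ m) b) ∧
    (∀ b b', ∫ ω, g ω b * g ω b' ∂μ =
      ((dLap 𝕜 head tail σ).submatrix Sum.inl Sum.inr *
        ((dLap 𝕜 head tail σ).submatrix Sum.inr Sum.inr)⁻¹ *
        (RImat 𝕜 : Matrix I (B ⊕ I) 𝕜) *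
        (dGrad 𝕜 head tail)ᵀ * C *
        dGrad 𝕜 head tail * (RImat 𝕜 : Matrix I (B ⊕ I) 𝕜)ᵀ *
        ((dLap 𝕜 head tail σ).submatrix Sum.inr Sum.inr)⁻¹ *
        (dLap 𝕜 head tail σ).submatrix Sum.inr Sum.inl) b b') := by
  obtain rfl : (fun e => ∫ ω, J ω e ∂μ) = m := funext hmean
  obtain rfl : Matrix.of (fun e e' => ∫ ω, J ω e * J ω e' ∂μ) = C := Matrix.ext hmoment
  have hgJ (ω : Ω) : g ω = boundaryCurrentMatrix 𝕜 head tail σ *ᵥ J ω :=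
    (hg ω).trans (boundaryCurrentMatrix_mulVec head tail σ (J ω)).symm
  simp only [hgJ]
  refine ⟨integral_mulVec_apply _ fun e => (hL2 e).integrable one_le_two, fun b b' => ?_⟩
  rw [integral_mulVec_mul_mulVec_apply _ _ fun e e' => (hL2 e).integrable_mul (hL2 e'),
    transpose_boundaryCurrentMatrix]
  simp only [boundaryCurrentMatrix, Matrix.mul_assoc]

/-- mean and covariance of the thermal-noise induced boundary currents
`g = (L_σ)_ℬℐ ((L_σ)_ℐℐ)⁻¹ R_ℐ ∇ᵀ J` for zero-mean square-integrable random edge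
currents `J` with covariance `(κ/π) δ_{e,e'} T(e) σ(e)`. -/
theorem boundary_current_mean_and_covariance
    (head tail : E → B ⊕ I) (hloop : ∀ e, head e ≠ tail e) (σ : E → ℝ)
    (T : E → ℝ) (hT : ∀ e, 0 < T e) (κ : ℝ) (hκ : 0 < κ)
    {Ω : Type*} [MeasurableSpace Ω] (μ : Measure Ω) [IsProbabilityMeasure μ]
    (J : Ω → E → ℝ)
    (hL2 : ∀ e, MemLp (fun ω => J ω e) 2 μ)
    (hmean : ∀ e, ∫ ω, J ω e ∂μ = 0)
    (hcov : ∀ e e', ∫ ω, J ω e * J ω e' ∂μ =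
      κ / Real.pi * ((if e = e' then 1 else 0) * T e * σ e))
    (hinv : IsUnit ((dLap ℝ head tail σ).submatrix Sum.inr Sum.inr))
    (g : Ω → B → ℝ)
    (hg : ∀ ω, g ω = (dLap ℝ head tail σ).submatrix Sum.inl Sum.inr *ᵥ
      (((dLap ℝ head tail σ).submatrix Sum.inr Sum.inr)⁻¹ *ᵥ
        (RImat ℝ *ᵥ ((dGrad ℝ head tail)ᵀ *ᵥ J ω)))) :
    (∀ b, ∫ ω, g ω b ∂μ = 0) ∧
    (∀ b b', ∫ ω, g ω b * g ω b' ∂μ =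
      ((κ / Real.pi) •
        ((dLap ℝ head tail σ).submatrix Sum.inl Sum.inr *
          ((dLap ℝ head tail σ).submatrix Sum.inr Sum.inr)⁻¹ *
          (RImat ℝ : Matrix I (B ⊕ I) ℝ) *
          (dGrad ℝ head tail)ᵀ * Matrix.diagonal (fun e => T e * σ e) *
          dGrad ℝ head tail * (RImat ℝ : Matrix I (B ⊕ I) ℝ)ᵀ *
          ((dLap ℝ head tail σ).submatrix Sum.inr Sum.inr)⁻¹ *
          (dLap ℝ head tail σ).submatrix Sum.inr Sum.inl)) b b') := by
  simpa [mul_assoc] using boundary_current_mean_and_covariance_general head tail σ μ J 0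
    ((κ / Real.pi) • diagonal fun e => T e * σ e) hL2 hmean
    (fun e e' => by simp [hcov, diagonal_apply]) hinv g hg
end
end

section
/- Assume (L_σ)_ℐℐ is invertible. For a temperature function T : ℰ → ℝ define the boundary current covariance matrix C(T) := (κ/π) (L_σ)_ℬℐ ((L_σ)_ℐℐ)⁻¹ R_ℐ ∇ᵀ diag(T ⊙ σ) ∇ R_ℐᵀ ((L_σ)_ℐℐ)⁻¹ (L_σ)_ℐℬ. Let T₀ be a constant temperature, δT ∈ ℝ, e ∈ ℰ, and T_e := T₀ + δT·δ_e. Then C(T_e) − C(T₀) = (κ/π) δT σ(e) r_eᵀ r_e, where r_e := δ_eᵀ ∇ R_ℐᵀ ((L_σ)_ℐℐ)⁻¹ (L_σ)_ℐℬ is a row vector indexed by ℬ; in particular the difference is a rank-at-most-one symmetric matrix. -/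
open Matrix

noncomputable section

variable {E B I : Type*} [Fintype E] [Fintype B] [Fintype I]
  [DecidableEq E] [DecidableEq B] [DecidableEq I]

/-!
The symmetry of `L_σ` makes the covariance a congruence `C(T) = (κ/π) Sᵀ diag(T ⊙ σ) S`, where the
rows of `S = ∇ R_ℐᵀ ((L_σ)_ℐℐ)⁻¹ (L_σ)_ℐℬ` are the vectors `r_e`. This is linear in `T`, so the
difference is `C(δT·δ_e)`, in which `diag` has a single nonzero entry and selects one row of `S`.
-/

theorem mul_diagonal_single_mul {l m n R : Type*} [Fintype m] [DecidableEq m] [CommSemiring R]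
    (M : Matrix l m R) (N : Matrix m n R) (i : m) (a : R) :
    M * diagonal (Pi.single i a) * N = a • vecMulVec (M.col i) (N.row i) := by
  have hsingle : diagonal (Pi.single i a) = a • vecMulVec (Pi.single i 1) (Pi.single i 1) := by
    rw [diagonal_single, ← single_eq_single_vecMulVec_single, smul_single, smul_eq_mul, mul_one]
  rw [hsingle, Matrix.mul_smul, Matrix.smul_mul, mul_vecMulVec, vecMulVec_mul,
    mulVec_single_one, single_one_vecMul]

section Covariance

variable {R : Type*} [CommRing R] (head tail : E → B ⊕ I) (w : E → R)

omit [Fintype B] [Fintype I] in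
theorem isSymm_dLap : (dLap R head tail w).IsSymm := by
  simp only [IsSymm, dLap, transpose_mul, transpose_transpose, diagonal_transpose, Matrix.mul_assoc]

/-- The matrix `∇ R_ℐᵀ ((L_w)_ℐℐ)⁻¹ (L_w)_ℐℬ`, whose row `e` is the vector `r_e`. Up to sign it
sends boundary values to the gradient of their harmonic extension with the boundary values
themselves replaced by zero. -/
def boundaryResponse : Matrix E B R :=
  dGrad R head tail * (RImat R : Matrix I (B ⊕ I) R)ᵀ *
    ((dLap R head tail w).submatrix Sum.inr Sum.inr)⁻¹ *
    (dLap R head tail w).submatrix Sum.inr Sum.inl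

/-- The boundary current covariance matrix `C(T)` for the edge weights `w` and the edge
temperatures `T`, with an arbitrary scalar `c` in place of the physical prefactor `κ/π`. -/
def boundaryCovariance (c : R) (T : E → R) : Matrix B B R :=
  c • ((dLap R head tail w).submatrix Sum.inl Sum.inr *
    ((dLap R head tail w).submatrix Sum.inr Sum.inr)⁻¹ *
    (RImat R : Matrix I (B ⊕ I) R) * (dGrad R head tail)ᵀ * diagonal (T * w) *
    dGrad R head tail * (RImat R : Matrix I (B ⊕ I) R)ᵀ *
    ((dLap R head tail w).submatrix Sum.inr Sum.inr)⁻¹ *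
    (dLap R head tail w).submatrix Sum.inr Sum.inl)

theorem transpose_boundaryResponse :
    (boundaryResponse head tail w)ᵀ =
      (dLap R head tail w).submatrix Sum.inl Sum.inr *
        ((dLap R head tail w).submatrix Sum.inr Sum.inr)⁻¹ *
        (RImat R : Matrix I (B ⊕ I) R) * (dGrad R head tail)ᵀ := by
  have hsymm := (isSymm_dLap head tail w).eq
  simp only [boundaryResponse, transpose_mul, transpose_nonsing_inv, transpose_submatrix, hsymm,
    transpose_transpose, Matrix.mul_assoc]

theorem boundaryCovariance_eq_transpose_mul_diagonal_mul (c : R) (T : E → R) :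
    boundaryCovariance head tail w c T =
      c • ((boundaryResponse head tail w)ᵀ * diagonal (T * w) * boundaryResponse head tail w) := by
  rw [transpose_boundaryResponse]
  simp only [boundaryCovariance, boundaryResponse, Matrix.mul_assoc]

theorem boundaryCovariance_add (c : R) (T T' : E → R) :
    boundaryCovariance head tail w c (T + T') =
      boundaryCovariance head tail w c T + boundaryCovariance head tail w c T' := by
  have hdiag : diagonal ((T + T') * w) = diagonal (T * w) + diagonal (T' * w) := by
    rw [add_mul, diagonal_add, Pi.add_def]
  simp only [boundaryCovariance_eq_transpose_mul_diagonal_mul, hdiag, Matrix.mul_add,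
    Matrix.add_mul, smul_add]

theorem boundaryCovariance_single (c t : R) (e : E) :
    boundaryCovariance head tail w c (Pi.single e t) =
      (c * t * w e) •
        vecMulVec (boundaryResponse head tail w e) (boundaryResponse head tail w e) := by
  have hsingle : Pi.single e t * w = Pi.single e (t * w e) :=
    (Pi.single_mul_left (α := fun _ => R) t).symm
  rw [boundaryCovariance_eq_transpose_mul_diagonal_mul, hsingle, mul_diagonal_single_mul,
    smul_smul, ← mul_assoc]
  rfl

theorem differential_covariance_rank_one_general [Nontrivial R] (c t : R) (T : E → R)
    (_hinv : IsUnit ((dLap R head tail w).submatrix Sum.inr Sum.inr)) (e : E) :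
    let D := boundaryCovariance head tail w c (T + Pi.single e t) -
      boundaryCovariance head tail w c T
    D = (c * t * w e) •
        vecMulVec (boundaryResponse head tail w e) (boundaryResponse head tail w e) ∧
      D.IsSymm ∧ D.rank ≤ 1 := by
  intro D
  have hD : D = (c * t * w e) •
      vecMulVec (boundaryResponse head tail w e) (boundaryResponse head tail w e) := by
    rw [← boundaryCovariance_single, sub_eq_iff_eq_add', boundaryCovariance_add]
  refine ⟨hD, ?_, ?_⟩
  · rw [hD]
    exact IsSymm.smul (transpose_vecMulVec _ _) _
  · rw [hD, ← smul_vecMulVec]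
    exact rank_vecMulVec_le _ _

end Covariance

/-- differential covariance measurement. For the covariance matrix
`C(T) = (κ/π) (L_σ)_ℬℐ ((L_σ)_ℐℐ)⁻¹ R_ℐ ∇ᵀ diag(T ⊙ σ) ∇ R_ℐᵀ ((L_σ)_ℐℐ)⁻¹ (L_σ)_ℐℬ`
and `T_e = T₀ + δT·δ_e`, one has `C(T_e) - C(T₀) = (κ/π) δT σ(e) r_eᵀ r_e` where
`r_e = δ_eᵀ ∇ R_ℐᵀ ((L_σ)_ℐℐ)⁻¹ (L_σ)_ℐℬ`; in particular the difference is a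
rank-at-most-one symmetric matrix. -/
theorem differential_covariance_rank_one
    (head tail : E → B ⊕ I) (hloop : ∀ e, head e ≠ tail e) (σ : E → ℝ)
    (κ T₀ δT : ℝ) (hκ : 0 < κ)
    (hinv : IsUnit ((dLap ℝ head tail σ).submatrix Sum.inr Sum.inr))
    (C : (E → ℝ) → Matrix B B ℝ)
    (hC : ∀ T : E → ℝ, C T = (κ / Real.pi) •
      ((dLap ℝ head tail σ).submatrix Sum.inl Sum.inr *
        ((dLap ℝ head tail σ).submatrix Sum.inr Sum.inr)⁻¹ *
        (RImat ℝ : Matrix I (B ⊕ I) ℝ) *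
        (dGrad ℝ head tail)ᵀ * Matrix.diagonal (fun e => T e * σ e) *
        dGrad ℝ head tail * (RImat ℝ : Matrix I (B ⊕ I) ℝ)ᵀ *
        ((dLap ℝ head tail σ).submatrix Sum.inr Sum.inr)⁻¹ *
        (dLap ℝ head tail σ).submatrix Sum.inr Sum.inl))
    (e : E)
    (r : B → ℝ)
    (hr : r = fun b =>
      (dGrad ℝ head tail * (RImat ℝ : Matrix I (B ⊕ I) ℝ)ᵀ *
        ((dLap ℝ head tail σ).submatrix Sum.inr Sum.inr)⁻¹ *
        (dLap ℝ head tail σ).submatrix Sum.inr Sum.inl) e b) :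
    C (fun e' => T₀ + δT * (if e' = e then 1 else 0)) - C (fun _ => T₀) =
      (κ / Real.pi * δT * σ e) • Matrix.vecMulVec r r ∧
    (C (fun e' => T₀ + δT * (if e' = e then 1 else 0)) - C (fun _ => T₀)).IsSymm ∧
    (C (fun e' => T₀ + δT * (if e' = e then 1 else 0)) - C (fun _ => T₀)).rank ≤ 1 := by
  obtain rfl : C = boundaryCovariance head tail σ (κ / Real.pi) := funext hC
  obtain rfl : r = boundaryResponse head tail σ e := hr
  simpa only [Pi.add_def, Pi.single_apply, mul_ite, mul_one, mul_zero] using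
    differential_covariance_rank_one_general head tail σ (κ / Real.pi) δT (fun _ => T₀) hinv e
end
end

section
/- Let σ : ℰ → (0,∞) and let u⁽ʲ⁾ : 𝒱 → ℝ, j = 1,…,N, be given. Define the sign functions s⁽ʲ⁾ : ℰ → {−1,1} by s⁽ʲ⁾ = 1 − 2·1_{supp ∇u⁽ʲ⁾}. Assume: (i) ⋃_{j=1}^N supp ∇u⁽ʲ⁾ = ℰ; (ii) (L_σ)_ℐℐ is invertible; (iii) (L_{s⁽ʲ⁾⊙σ})_ℐℐ is invertible for j = 1,…,N. Then the linearized inverse conductivity problem from power measurements is injective: if δσ : ℰ → ℝ and δu⁽ʲ⁾ : 𝒱 → ℝ satisfy, for all j = 1,…,N, the equations |∇u⁽ʲ⁾|² ⊙ δσ + 2σ ⊙ (∇u⁽ʲ⁾) ⊙ (∇δu⁽ʲ⁾) = 0, (δu⁽ʲ⁾)_ℬ = 0, and (∇ᵀ((∇u⁽ʲ⁾) ⊙ δσ))_ℐ + (L_σ δu⁽ʲ⁾)_ℐ = 0, then δσ = 0 and δu⁽ʲ⁾ = 0 for all j. -/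
/-!
On an edge where `∇u` does not vanish, the linearized power equation can be divided by `∇u`, which
gives `∇u δσ = -2 σ ∇δu`; there the linearized current `∇u δσ + σ ∇δu` is `-σ ∇δu`, and on the other
edges it is `σ ∇δu`. So it is `s σ ∇δu` throughout, and its conservation at the interior nodes says
that `δu` solves the homogeneous Dirichlet problem for `L_{sσ}`. Hence `δu = 0`, and then
`|∇u|² δσ = 0` makes `δσ` vanish on the support of `∇u`; these supports cover all edges.
-/

open Matrix

noncomputable section

variable {E B I : Type*} [Fintype E] [Fintype B] [Fintype I]
  [DecidableEq E] [DecidableEq B] [DecidableEq I]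

section DirichletProblem

variable {l m n ℬ ℐ R : Type*}

theorem mul_diagonal_mul_mulVec [Fintype m] [Fintype n] [DecidableEq m] [NonUnitalSemiring R]
    (C : Matrix l m R) (w : m → R) (A : Matrix m n R) (v : n → R) :
    (C * diagonal w * A) *ᵥ v = C *ᵥ (w * (A *ᵥ v)) := by
  have diagonal_mulVec : diagonal w *ᵥ (A *ᵥ v) = w * (A *ᵥ v) :=
    funext (mulVec_diagonal w (A *ᵥ v))
  rw [← mulVec_mulVec, ← mulVec_mulVec, diagonal_mulVec]

variable [Fintype ℬ] [Fintype ℐ] [NonUnitalNonAssocSemiring R]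

theorem submatrix_inr_mulVec_comp_inr (M : Matrix m (ℬ ⊕ ℐ) R) (r : l → m) {v : ℬ ⊕ ℐ → R}
    (hv : v ∘ Sum.inl = 0) :
    M.submatrix r Sum.inr *ᵥ (v ∘ Sum.inr) = (M *ᵥ v) ∘ r := by
  have hv_inl (b : ℬ) : v (Sum.inl b) = 0 := congrFun hv b
  ext i
  simp [mulVec, dotProduct, Fintype.sum_sum_type, hv_inl]

theorem eq_zero_of_dirichlet {M : Matrix (ℬ ⊕ ℐ) (ℬ ⊕ ℐ) R}
    (hM : Function.Injective (M.submatrix Sum.inr Sum.inr).mulVec) {v : ℬ ⊕ ℐ → R}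
    (hv : v ∘ Sum.inl = 0) (hMv : (M *ᵥ v) ∘ Sum.inr = 0) : v = 0 := by
  have hv_inr : v ∘ Sum.inr = 0 := hM <| by
    rw [submatrix_inr_mulVec_comp_inr M Sum.inr hv, hMv, mulVec_zero]
  exact funext (Sum.rec (congrFun hv) (congrFun hv_inr))

end DirichletProblem

section Linearization

variable {α ι ℰ ℬ ℐ R : Type*} [CommRing R]

open Classical in
/-- The function `1 - 2 · 1_{supp g}`, equal to `-1` on the support of `g` and to `1` elsewhere. It
is the sign `s⁽ʲ⁾` by which the conductivity is multiplied when `g = ∇u⁽ʲ⁾`. -/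
def supportSign (g : α → R) (x : α) : R :=
  if g x = 0 then 1 else -1

variable [NoZeroDivisors R]

theorem linearized_current_eq_supportSign_mul {g σ δσ d : α → R}
    (hpower : g ^ 2 * δσ + 2 * σ * g * d = 0) :
    g * δσ + σ * d = supportSign g * σ * d := by
  ext x
  simp only [Pi.add_apply, Pi.mul_apply]
  by_cases hx : g x = 0
  · simp [supportSign, hx]
  · have power_at : g x ^ 2 * δσ x + 2 * σ x * g x * d x = 0 := congrFun hpower x
    have power_factored : g x * (g x * δσ x + 2 * σ x * d x) = 0 := by
      linear_combination power_at
    have power_div : g x * δσ x + 2 * σ x * d x = 0 :=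
      (mul_eq_zero.mp power_factored).resolve_left hx
    rw [supportSign, if_neg hx]
    linear_combination power_div

variable [Fintype ℰ] [Fintype ℬ] [Fintype ℐ] [DecidableEq ℰ]

theorem potential_perturbation_eq_zero {A : Matrix ℰ (ℬ ⊕ ℐ) R} {σ δσ : ℰ → R}
    {u δu : ℬ ⊕ ℐ → R}
    (hinj : Function.Injective
      ((Aᵀ * diagonal (supportSign (A *ᵥ u) * σ) * A).submatrix Sum.inr Sum.inr).mulVec)
    (hpower : (A *ᵥ u) ^ 2 * δσ + 2 * σ * (A *ᵥ u) * (A *ᵥ δu) = 0)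
    (hbdry : δu ∘ Sum.inl = 0)
    (hcurrent : (Aᵀ *ᵥ ((A *ᵥ u) * δσ)) ∘ Sum.inr +
      ((Aᵀ * diagonal σ * A) *ᵥ δu) ∘ Sum.inr = 0) :
    δu = 0 := by
  have laplacian_eq : (Aᵀ * diagonal (supportSign (A *ᵥ u) * σ) * A) *ᵥ δu =
      Aᵀ *ᵥ ((A *ᵥ u) * δσ) + (Aᵀ * diagonal σ * A) *ᵥ δu := by
    rw [mul_diagonal_mul_mulVec, mul_diagonal_mul_mulVec,
      ← linearized_current_eq_supportSign_mul hpower, mulVec_add]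
  refine eq_zero_of_dirichlet hinj hbdry ?_
  rw [laplacian_eq]
  exact hcurrent

theorem real_conductivity_linearization_injective_general
    (A : Matrix ℰ (ℬ ⊕ ℐ) R) (σ : ℰ → R) (u : ι → ℬ ⊕ ℐ → R)
    (hcover : ∀ e, ∃ j, (A *ᵥ u j) e ≠ 0)
    (hinj : ∀ j, Function.Injective
      ((Aᵀ * diagonal (supportSign (A *ᵥ u j) * σ) * A).submatrix Sum.inr Sum.inr).mulVec)
    (δσ : ℰ → R) (δu : ι → ℬ ⊕ ℐ → R)
    (hpower : ∀ j, (A *ᵥ u j) ^ 2 * δσ + 2 * σ * (A *ᵥ u j) * (A *ᵥ δu j) = 0)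
    (hbdry : ∀ j, δu j ∘ Sum.inl = 0)
    (hcurrent : ∀ j, (Aᵀ *ᵥ ((A *ᵥ u j) * δσ)) ∘ Sum.inr +
      ((Aᵀ * diagonal σ * A) *ᵥ δu j) ∘ Sum.inr = 0) :
    δσ = 0 ∧ ∀ j, δu j = 0 := by
  have δu_eq_zero (j : ι) : δu j = 0 :=
    potential_perturbation_eq_zero (hinj j) (hpower j) (hbdry j) (hcurrent j)
  refine ⟨funext fun e => ?_, δu_eq_zero⟩
  obtain ⟨j, hj⟩ := hcover e
  have power_at : (A *ᵥ u j) e ^ 2 * δσ e = 0 := by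
    simpa [δu_eq_zero j] using congrFun (hpower j) e
  exact (mul_eq_zero.mp power_at).resolve_left (pow_ne_zero 2 hj)

end Linearization

/-- local uniqueness for the discrete inverse conductivity problem from
power measurements: under the cover condition and invertibility of `(L_σ)_ℐℐ` and of
the `(L_{s⁽ʲ⁾⊙σ})_ℐℐ`, the linearized problem is injective. -/
theorem real_conductivity_linearization_injective
    (head tail : E → B ⊕ I) (hloop : ∀ e, head e ≠ tail e)
    (σ : E → ℝ) (hσ : ∀ e, 0 < σ e)
    (N : ℕ) (u : Fin N → B ⊕ I → ℝ)
    (s : Fin N → E → ℝ)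
    (hs : ∀ j e, s j e = 1 - 2 * (if (dGrad ℝ head tail *ᵥ u j) e ≠ 0 then 1 else 0))
    (hcover : ∀ e : E, ∃ j, (dGrad ℝ head tail *ᵥ u j) e ≠ 0)
    (hinv : IsUnit ((dLap ℝ head tail σ).submatrix Sum.inr Sum.inr))
    (hinvs : ∀ j, IsUnit
      ((dLap ℝ head tail (fun e => s j e * σ e)).submatrix Sum.inr Sum.inr))
    (δσ : E → ℝ) (δu : Fin N → B ⊕ I → ℝ)
    (h1 : ∀ j e, ((dGrad ℝ head tail *ᵥ u j) e) ^ 2 * δσ e +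
      2 * σ e * (dGrad ℝ head tail *ᵥ u j) e * (dGrad ℝ head tail *ᵥ δu j) e = 0)
    (h2 : ∀ j, δu j ∘ Sum.inl = 0)
    (h3 : ∀ j, (((dGrad ℝ head tail)ᵀ *ᵥ fun e => (dGrad ℝ head tail *ᵥ u j) e * δσ e) ∘
        Sum.inr) + (dLap ℝ head tail σ *ᵥ δu j) ∘ Sum.inr = 0) :
    δσ = 0 ∧ ∀ j, δu j = 0 := by
  obtain rfl : s = fun j => supportSign (dGrad ℝ head tail *ᵥ u j) := by
    ext j e
    by_cases he : (dGrad ℝ head tail *ᵥ u j) e = 0 <;> norm_num [hs, supportSign, he]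
  exact real_conductivity_linearization_injective_general (dGrad ℝ head tail) σ u hcover
    (fun j => mulVec_injective_of_isUnit (hinvs j)) δσ δu (fun j => funext (h1 j)) h2 h3
end
end

section
/- Let σ : ℰ → ℝ and u : 𝒱 → ℝ, and set s := 1 − 2·1_{supp ∇u}. Suppose δσ : ℰ → ℝ and δu : 𝒱 → ℝ satisfy |∇u|² ⊙ δσ + 2σ ⊙ (∇u) ⊙ (∇δu) = 0, (δu)_ℬ = 0, and (∇ᵀ((∇u) ⊙ δσ))_ℐ + (L_σ δu)_ℐ = 0. Then: (a) δσ ⊙ 1_{supp ∇u} = −2 (∇u)† ⊙ σ ⊙ (∇ R_ℐᵀ δu_ℐ), and (b) (L_{s⊙σ})_ℐℐ δu_ℐ = 0. -/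
open Matrix

noncomputable section

variable {E B I : Type*} [Fintype E] [Fintype B] [Fintype I]
  [DecidableEq E] [DecidableEq B] [DecidableEq I]

/-!
On an edge where `∇u ≠ 0`, dividing the linearized power density equation by `∇u` gives
`∇u δσ = -2 σ ∇δu`, which is (a) after one more division. Hence the linearized current
`∇u δσ + σ ∇δu` equals `-σ ∇δu` on such an edge, while it is `σ ∇δu` on the others. It is thus the
current of `δu` for the sign-flipped conductivity `s σ`, so the linearized interior current balance
is (b).
-/

section Edge

variable {R : Type*} [CommRing R] [NoZeroDivisors R] {g c δg δc : R}

theorem mul_eq_neg_two_mul_of_linearized_power_eq_zero (hg : g ≠ 0)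
    (h : g ^ 2 * δc + 2 * c * g * δg = 0) : g * δc = -2 * c * δg := by
  have hfactor : g * (g * δc + 2 * c * δg) = 0 := by linear_combination h
  linear_combination (mul_eq_zero.mp hfactor).resolve_left hg

theorem sign_flip_mul_eq_linearized_current [DecidableEq R]
    (h : g ^ 2 * δc + 2 * c * g * δg = 0) :
    (1 - 2 * (if g ≠ 0 then 1 else 0)) * c * δg = g * δc + c * δg := by
  by_cases hg : g = 0
  · simp [hg]
  · rw [if_pos hg]
    linear_combination -mul_eq_neg_two_mul_of_linearized_power_eq_zero hg h

end Edge

theorem mul_support_indicator_eq_of_linearized_power_eq_zero {K : Type*} [Field K] [DecidableEq K]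
    {g c δg δc : K} (h : g ^ 2 * δc + 2 * c * g * δg = 0) :
    δc * (if g ≠ 0 then 1 else 0) = -2 * (if g ≠ 0 then g⁻¹ else 0) * c * δg := by
  by_cases hg : g = 0
  · simp [hg]
  · have hcancel := mul_eq_neg_two_mul_of_linearized_power_eq_zero hg h
    rw [if_pos hg, if_pos hg]
    calc
      δc * 1 = g⁻¹ * (g * δc) := by rw [inv_mul_cancel_left₀ hg, mul_one]
      _ = -2 * g⁻¹ * c * δg := by rw [hcancel]; ring

section MulVec

variable {R l m n p : Type*} [Fintype m] [Fintype n]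

theorem RImat_transpose_mulVec [Ring R] [DecidableEq p] [DecidableEq n] (y : n → R) :
    (RImat R : Matrix n (p ⊕ n) R)ᵀ *ᵥ y = Sum.elim (0 : p → R) y := by
  ext (b | i) <;> simp [RImat, mulVec, dotProduct]

theorem submatrix_inr_mulVec [NonUnitalNonAssocSemiring R]
    (M : Matrix l (m ⊕ n) R) (f : p → l) (y : n → R) :
    M.submatrix f Sum.inr *ᵥ y = (M *ᵥ Sum.elim (0 : m → R) y) ∘ f := by
  ext i
  simp [mulVec, dotProduct, Fintype.sum_sum_type]

theorem transpose_mul_diagonal_mul_mulVec [CommSemiring R] [DecidableEq m]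
    (D : Matrix m n R) (w : m → R) (x : n → R) :
    (Dᵀ * diagonal w * D) *ᵥ x = Dᵀ *ᵥ fun e => w e * (D *ᵥ x) e := by
  rw [← mulVec_mulVec, ← mulVec_mulVec]
  congr 1
  ext e
  exact mulVec_diagonal w (D *ᵥ x) e

end MulVec

theorem real_conductivity_linearization_identities_general {K : Type*} [Field K] [DecidableEq K]
    (D : Matrix E (B ⊕ I) K) (σ : E → K) (u : B ⊕ I → K) (s : E → K)
    (hs : ∀ e, s e = 1 - 2 * (if (D *ᵥ u) e ≠ 0 then 1 else 0))
    (δσ : E → K) (δu : B ⊕ I → K)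
    (hpower : ∀ e, (D *ᵥ u) e ^ 2 * δσ e + 2 * σ e * (D *ᵥ u) e * (D *ᵥ δu) e = 0)
    (hboundary : δu ∘ Sum.inl = 0)
    (hbalance : (Dᵀ *ᵥ fun e => (D *ᵥ u) e * δσ e) ∘ Sum.inr +
      ((Dᵀ * diagonal σ * D) *ᵥ δu) ∘ Sum.inr = 0) :
    (∀ e, δσ e * (if (D *ᵥ u) e ≠ 0 then 1 else 0) =
      -2 * (if (D *ᵥ u) e ≠ 0 then ((D *ᵥ u) e)⁻¹ else 0) * σ e *
        (D *ᵥ ((RImat K : Matrix I (B ⊕ I) K)ᵀ *ᵥ (δu ∘ Sum.inr))) e) ∧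
    (Dᵀ * diagonal (fun e => s e * σ e) * D).submatrix Sum.inr Sum.inr *ᵥ (δu ∘ Sum.inr) = 0 := by
  have hextend : Sum.elim (0 : B → K) (δu ∘ Sum.inr) = δu := by
    rw [← hboundary, Sum.elim_comp_inl_inr]
  have hcurrent : (fun e => s e * σ e * (D *ᵥ δu) e) =
      (fun e => (D *ᵥ u) e * δσ e) + fun e => σ e * (D *ᵥ δu) e := by
    ext e
    rw [hs, sign_flip_mul_eq_linearized_current (hpower e), Pi.add_apply]
  refine ⟨fun e => ?_, ?_⟩
  · rw [RImat_transpose_mulVec, hextend]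
    exact mul_support_indicator_eq_of_linearized_power_eq_zero (hpower e)
  · rw [submatrix_inr_mulVec, hextend, transpose_mul_diagonal_mul_mulVec, hcurrent, mulVec_add]
    rwa [transpose_mul_diagonal_mul_mulVec] at hbalance

/-- key identities in the proof of local uniqueness for the real
conductivity problem: (a) `δσ ⊙ 1_{supp ∇u} = -2 (∇u)† ⊙ σ ⊙ (∇ R_ℐᵀ δu_ℐ)` and
(b) `(L_{s⊙σ})_ℐℐ δu_ℐ = 0`, where `s = 1 - 2·1_{supp ∇u}`. -/
theorem real_conductivity_linearization_identities
    (head tail : E → B ⊕ I) (hloop : ∀ e, head e ≠ tail e)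
    (σ : E → ℝ) (u : B ⊕ I → ℝ)
    (s : E → ℝ)
    (hs : ∀ e, s e = 1 - 2 * (if (dGrad ℝ head tail *ᵥ u) e ≠ 0 then 1 else 0))
    (δσ : E → ℝ) (δu : B ⊕ I → ℝ)
    (h1 : ∀ e, ((dGrad ℝ head tail *ᵥ u) e) ^ 2 * δσ e +
      2 * σ e * (dGrad ℝ head tail *ᵥ u) e * (dGrad ℝ head tail *ᵥ δu) e = 0)
    (h2 : δu ∘ Sum.inl = 0)
    (h3 : (((dGrad ℝ head tail)ᵀ *ᵥ fun e => (dGrad ℝ head tail *ᵥ u) e * δσ e) ∘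
        Sum.inr) + (dLap ℝ head tail σ *ᵥ δu) ∘ Sum.inr = 0) :
    (∀ e, δσ e * (if (dGrad ℝ head tail *ᵥ u) e ≠ 0 then 1 else 0) =
      -2 * (if (dGrad ℝ head tail *ᵥ u) e ≠ 0 then ((dGrad ℝ head tail *ᵥ u) e)⁻¹ else 0) *
        σ e *
        (dGrad ℝ head tail *ᵥ ((RImat ℝ : Matrix I (B ⊕ I) ℝ)ᵀ *ᵥ (δu ∘ Sum.inr))) e) ∧
    (dLap ℝ head tail (fun e => s e * σ e)).submatrix Sum.inr Sum.inr *ᵥ (δu ∘ Sum.inr)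
      = 0 := by
  exact real_conductivity_linearization_identities_general
    (dGrad ℝ head tail) σ u s hs δσ δu h1 h2 h3
end
end

section
/- Let σ' : ℰ → (0,∞), σ'' : ℰ → ℝ, ω₁ ∈ ℝ with ω₁ ≠ 0, σ := σ' + iω₁σ'', and suppose (L_σ)_ℐℐ is invertible. Let u₁ : 𝒱 → ℂ satisfy (∇ᵀ(σ ⊙ ∇u₁))_ℐ = 0. Suppose δσ'' : ℰ → ℝ and δu₁ : 𝒱 → ℂ satisfy (δu₁)_ℬ = 0 and (∇ᵀ((∇u₁) ⊙ (iω₁δσ'')))_ℐ + (L_σ δu₁)_ℐ = 0. Then: (a) δu₁ = −iω₁ R_ℐᵀ ((L_σ)_ℐℐ)⁻¹ R_ℐ ∇ᵀ diag(∇u₁) δσ''; and (b) if in addition σ' ⊙ conj(∇u₁) ⊙ ∇δu₁ + σ' ⊙ (∇u₁) ⊙ conj(∇δu₁) = 0, then Re(A) δσ'' = 0, where A := −i diag(conj(∇u₁)) ∇ R_ℐᵀ ((L_σ)_ℐℐ)⁻¹ R_ℐ ∇ᵀ diag(∇u₁). -/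
open Matrix

noncomputable section

variable {E B I : Type*} [Fintype E] [Fintype B] [Fintype I]
  [DecidableEq E] [DecidableEq B] [DecidableEq I]

/-!
Restricting the linearized equation to interior nodes, where `δu₁` lives, and inverting `(L_σ)_ℐℐ`
gives `δu₁`. Multiplying `∇δu₁` by `conj(∇u₁)` then gives `conj(∇u₁) ⊙ ∇δu₁ = ω₁ A δσ''`, while the
extra equation says that `2 σ' Re(conj(∇u₁) ⊙ ∇δu₁) = 0`. Since `δσ''`, `ω₁` and `σ'` are real, and
the last two do not vanish, the real part of `A` annihilates `δσ''`.
-/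

section Restriction

variable {R : Type*}

theorem RImat_mulVec [Ring R] (v : B ⊕ I → R) :
    (RImat R : Matrix I (B ⊕ I) R) *ᵥ v = v ∘ Sum.inr := by
  ext i
  simp [RImat, mulVec, dotProduct]

theorem RImat_transpose_mulVec_RImat_mulVec [Ring R] {v : B ⊕ I → R} (hv : v ∘ Sum.inl = 0) :
    (RImat R : Matrix I (B ⊕ I) R)ᵀ *ᵥ (RImat R *ᵥ v) = v := by
  rw [RImat_mulVec]
  ext (b | i)
  · simpa [RImat, mulVec, dotProduct] using (congrFun hv b).symm
  · simp [RImat, mulVec, dotProduct]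

theorem RImat_mul_mul_transpose [Ring R] (L : Matrix (B ⊕ I) (B ⊕ I) R) :
    (RImat R : Matrix I (B ⊕ I) R) * L * (RImat R : Matrix I (B ⊕ I) R)ᵀ =
      L.submatrix Sum.inr Sum.inr := by
  ext i j
  simp [RImat, Matrix.mul_apply]

theorem dirichlet_solution_eq [CommRing R] {L : Matrix (B ⊕ I) (B ⊕ I) R}
    (hL : IsUnit (L.submatrix Sum.inr Sum.inr)) {f v : B ⊕ I → R} (hv : v ∘ Sum.inl = 0)
    (h : f ∘ Sum.inr + (L *ᵥ v) ∘ Sum.inr = 0) :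
    v = -(((RImat R : Matrix I (B ⊕ I) R)ᵀ * (L.submatrix Sum.inr Sum.inr)⁻¹ *
      (RImat R : Matrix I (B ⊕ I) R)) *ᵥ f) := by
  set ρ : Matrix I (B ⊕ I) R := RImat R
  set M := L.submatrix Sum.inr Sum.inr
  have extend : ρᵀ *ᵥ (ρ *ᵥ v) = v := RImat_transpose_mulVec_RImat_mulVec hv
  have interior_equation : M *ᵥ (ρ *ᵥ v) = -(ρ *ᵥ f) := calc
    M *ᵥ (ρ *ᵥ v) = ρ *ᵥ (L *ᵥ (ρᵀ *ᵥ (ρ *ᵥ v))) := by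
      simp only [show M = ρ * L * ρᵀ from (RImat_mul_mul_transpose L).symm, mulVec_mulVec,
        Matrix.mul_assoc]
    _ = (L *ᵥ v) ∘ Sum.inr := by rw [extend, RImat_mulVec]
    _ = -(ρ *ᵥ f) := by rw [eq_neg_of_add_eq_zero_right h, RImat_mulVec]
  calc
    v = ρᵀ *ᵥ (M⁻¹ *ᵥ (M *ᵥ (ρ *ᵥ v))) := by
      rw [mulVec_mulVec _ M⁻¹, nonsing_inv_mul M ((isUnit_iff_isUnit_det M).1 hL), one_mulVec,
        extend]
    _ = -((ρᵀ * M⁻¹ * ρ) *ᵥ f) := by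
      simp only [interior_equation, mulVec_neg, mulVec_mulVec, Matrix.mul_assoc]

theorem linearized_potential_eq [CommRing R] {L : Matrix (B ⊕ I) (B ⊕ I) R}
    (hL : IsUnit (L.submatrix Sum.inr Sum.inr)) (D : Matrix E (B ⊕ I) R) (g x : E → R) (c : R)
    {v : B ⊕ I → R} (hv : v ∘ Sum.inl = 0)
    (h : (Dᵀ *ᵥ fun e => g e * (c * x e)) ∘ Sum.inr + (L *ᵥ v) ∘ Sum.inr = 0) :
    v = ((-c) • ((RImat R : Matrix I (B ⊕ I) R)ᵀ * (L.submatrix Sum.inr Sum.inr)⁻¹ *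
      (RImat R : Matrix I (B ⊕ I) R) * Dᵀ * diagonal g)) *ᵥ x := by
  have source : (fun e => g e * (c * x e)) = c • (diagonal g *ᵥ x) := by
    ext e
    simp only [mulVec_diagonal, Pi.smul_apply, smul_eq_mul]
    ring
  rw [source] at h
  refine (dirichlet_solution_eq hL hv h).trans ?_
  simp only [mulVec_smul, smul_mulVec, neg_smul, neg_mulVec, mulVec_mulVec, Matrix.mul_assoc]

end Restriction

section RealPart

variable {m n k : Type*}

theorem map_re_mulVec_apply [Fintype n] (A : Matrix m n ℂ) (x : n → ℝ) (i : m) :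
    (A.map Complex.re *ᵥ x) i = ((A *ᵥ fun j => (x j : ℂ)) i).re := by
  simp [mulVec, dotProduct]

theorem re_conj_mul_eq_zero {s : ℝ} (hs : s ≠ 0) {a b : ℂ}
    (h : s * starRingEnd ℂ a * b + s * a * starRingEnd ℂ b = 0) :
    (starRingEnd ℂ a * b).re = 0 := by
  have twice_re : (s : ℂ) * ((2 * (starRingEnd ℂ a * b).re : ℝ) : ℂ) = 0 := by
    rw [← Complex.add_conj, map_mul, Complex.conj_conj]
    linear_combination h
  norm_cast at twice_re
  exact (mul_eq_zero.1 ((mul_eq_zero.1 twice_re).resolve_left hs)).resolve_left two_ne_zero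

theorem map_re_mulVec_eq_zero [Fintype m] [DecidableEq m] [Fintype n] [Fintype k]
    (D : Matrix m n ℂ) (P : Matrix n k ℂ) (g : m → ℂ) (x : k → ℝ) {ω : ℝ} (hω : ω ≠ 0)
    {v : n → ℂ} (hv : v = ((-Complex.I * (ω : ℂ)) • P) *ᵥ fun j => (x j : ℂ))
    (h : ∀ e, (starRingEnd ℂ (g e) * (D *ᵥ v) e).re = 0) :
    ((-Complex.I) • (diagonal (fun e => starRingEnd ℂ (g e)) * D * P)).map Complex.re *ᵥ x = 0 := by
  set A := (-Complex.I) • (diagonal (fun e => starRingEnd ℂ (g e)) * D * P) with hA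
  have conj_mul_eq (e : m) :
      starRingEnd ℂ (g e) * (D *ᵥ v) e = ω * (A *ᵥ fun j => (x j : ℂ)) e := by
    simp only [hv, hA, smul_mulVec, mulVec_smul, ← mulVec_mulVec, mulVec_diagonal, Pi.smul_apply,
      smul_eq_mul]
    ring
  ext e
  have re_eq := h e
  rw [conj_mul_eq, Complex.re_ofReal_mul, ← map_re_mulVec_apply] at re_eq
  exact (mul_eq_zero.1 re_eq).resolve_left hω

end RealPart

/-- `D`, `L` and `g` take the places of `∇`, `L_σ` and `∇u₁`. -/
theorem complex_conductivity_linearization_identities_general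
    {L : Matrix (B ⊕ I) (B ⊕ I) ℂ} (hL : IsUnit (L.submatrix Sum.inr Sum.inr))
    (D : Matrix E (B ⊕ I) ℂ) (g : E → ℂ) {σ' : E → ℝ} (hσ' : ∀ e, σ' e ≠ 0)
    {ω₁ : ℝ} (hω₁ : ω₁ ≠ 0) (δσ'' : E → ℝ) {δu : B ⊕ I → ℂ} (hbd : δu ∘ Sum.inl = 0)
    (hlin : (Dᵀ *ᵥ fun e => g e * ((ω₁ : ℂ) * (δσ'' e : ℂ) * Complex.I)) ∘ Sum.inr +
      (L *ᵥ δu) ∘ Sum.inr = 0) :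
    δu = ((-Complex.I * (ω₁ : ℂ)) • ((RImat ℂ : Matrix I (B ⊕ I) ℂ)ᵀ *
        (L.submatrix Sum.inr Sum.inr)⁻¹ * (RImat ℂ : Matrix I (B ⊕ I) ℂ) * Dᵀ * diagonal g)) *ᵥ
        (fun e => (δσ'' e : ℂ)) ∧
    ((∀ e, σ' e * starRingEnd ℂ (g e) * (D *ᵥ δu) e +
        σ' e * g e * starRingEnd ℂ ((D *ᵥ δu) e) = 0) →
      ((-Complex.I) • (diagonal (fun e => starRingEnd ℂ (g e)) * D *
        (RImat ℂ : Matrix I (B ⊕ I) ℂ)ᵀ * (L.submatrix Sum.inr Sum.inr)⁻¹ *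
        (RImat ℂ : Matrix I (B ⊕ I) ℂ) * Dᵀ * diagonal g)).map Complex.re *ᵥ δσ'' = 0) := by
  have source (e : E) : (ω₁ : ℂ) * (δσ'' e : ℂ) * Complex.I = Complex.I * ω₁ * δσ'' e := by ring
  simp only [source] at hlin
  have potential_eq := linearized_potential_eq hL D g _ _ hbd hlin
  rw [← neg_mul] at potential_eq
  refine ⟨potential_eq, fun h => ?_⟩
  simpa only [Matrix.mul_assoc] using map_re_mulVec_eq_zero D _ g δσ'' hω₁ potential_eq
    fun e => re_conj_mul_eq_zero (hσ' e) (h e)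

/-- key identities in the proof of local uniqueness for the complex
conductivity problem: (a) the formula for `δu₁` in terms of `δσ''` and (b) the
equation `Re(A) δσ'' = 0`. -/
theorem complex_conductivity_linearization_identities
    (head tail : E → B ⊕ I) (hloop : ∀ e, head e ≠ tail e)
    (σ' : E → ℝ) (hσ' : ∀ e, 0 < σ' e) (σ'' : E → ℝ) (ω₁ : ℝ) (hω₁ : ω₁ ≠ 0)
    (σc : E → ℂ) (hσc : σc = fun e => (σ' e : ℂ) + (ω₁ : ℂ) * (σ'' e : ℂ) * Complex.I)
    (hinv : IsUnit ((dLap ℂ head tail σc).submatrix Sum.inr Sum.inr))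
    (u₁ : B ⊕ I → ℂ)
    (hu₁ : (((dGrad ℂ head tail)ᵀ *ᵥ fun e => σc e * (dGrad ℂ head tail *ᵥ u₁) e) ∘
      Sum.inr) = 0)
    (δσ'' : E → ℝ) (δu₁ : B ⊕ I → ℂ)
    (hbd : δu₁ ∘ Sum.inl = 0)
    (hlin : (((dGrad ℂ head tail)ᵀ *ᵥ fun e =>
        (dGrad ℂ head tail *ᵥ u₁) e * ((ω₁ : ℂ) * (δσ'' e : ℂ) * Complex.I)) ∘
        Sum.inr) + (dLap ℂ head tail σc *ᵥ δu₁) ∘ Sum.inr = 0)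
    (A : Matrix E E ℂ)
    (hA : A = (-Complex.I) •
      (Matrix.diagonal (fun e => starRingEnd ℂ ((dGrad ℂ head tail *ᵥ u₁) e)) *
        dGrad ℂ head tail * (RImat ℂ : Matrix I (B ⊕ I) ℂ)ᵀ *
        ((dLap ℂ head tail σc).submatrix Sum.inr Sum.inr)⁻¹ *
        (RImat ℂ : Matrix I (B ⊕ I) ℂ) * (dGrad ℂ head tail)ᵀ *
        Matrix.diagonal (fun e => (dGrad ℂ head tail *ᵥ u₁) e))) :
    δu₁ = ((-Complex.I * (ω₁ : ℂ)) •
        ((RImat ℂ : Matrix I (B ⊕ I) ℂ)ᵀ *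
          ((dLap ℂ head tail σc).submatrix Sum.inr Sum.inr)⁻¹ *
          (RImat ℂ : Matrix I (B ⊕ I) ℂ) * (dGrad ℂ head tail)ᵀ *
          Matrix.diagonal (fun e => (dGrad ℂ head tail *ᵥ u₁) e))) *ᵥ
        (fun e => (δσ'' e : ℂ)) ∧
    ((∀ e, σ' e * (starRingEnd ℂ ((dGrad ℂ head tail *ᵥ u₁) e)) *
        (dGrad ℂ head tail *ᵥ δu₁) e +
      σ' e * (dGrad ℂ head tail *ᵥ u₁) e *
        starRingEnd ℂ ((dGrad ℂ head tail *ᵥ δu₁) e) = 0) →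
      (Matrix.of fun e e' => (A e e').re) *ᵥ δσ'' = 0) := by
  subst hA
  exact complex_conductivity_linearization_identities_general hinv _ _ (fun e => (hσ' e).ne') hω₁
    δσ'' hbd hlin
end
end

section
/- Let σ : ℰ → (0,∞) and q : ℐ → ℝ, and let u⁽ʲ⁾ : 𝒱 → ℝ, j = 1,…,N, be given. Define the sign functions s⁽ʲ⁾ : ℐ → {−1,1} by s⁽ʲ⁾ = 1 − 2·1_{supp u⁽ʲ⁾_ℐ}. Assume: (i) ⋃_{j=1}^N supp u⁽ʲ⁾_ℐ = ℐ; (ii) (L_σ)_ℐℐ + diag(q) is invertible; (iii) (L_σ)_ℐℐ + diag(s⁽ʲ⁾ ⊙ q) is invertible for j = 1,…,N. Then the linearized inverse Schrödinger problem from dissipated power measurements is injective: if δq : ℐ → ℝ and δu⁽ʲ⁾ : 𝒱 → ℝ satisfy, for all j = 1,…,N, (L_σ δu⁽ʲ⁾)_ℐ + δq ⊙ u⁽ʲ⁾_ℐ + q ⊙ δu⁽ʲ⁾_ℐ = 0, (δu⁽ʲ⁾)_ℬ = 0, and δq ⊙ |u⁽ʲ⁾_ℐ|² + 2q ⊙ δu⁽ʲ⁾_ℐ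 ⊙ u⁽ʲ⁾_ℐ = 0, then δq = 0 and δu⁽ʲ⁾ = 0 for all j. -/
open Matrix

noncomputable section

variable {E B I : Type*} [Fintype E] [Fintype B] [Fintype I]
  [DecidableEq E] [DecidableEq B] [DecidableEq I]

/-!
Where `u i ≠ 0`, the vanishing linearized power `δq i * u i ^ 2 + 2 * q i * δu i * u i` can be
divided by `u i`, giving `δq i * u i = -2 * q i * δu i`; where `u i = 0`, the term `δq i * u i` is
absent from the linearized equation. In both cases `δq i * u i + q i * δu i = s i * q i * δu i`, so
the interior part of `δu` lies in the kernel of `L_ℐℐ + diag(s ⊙ q)` and `δu` vanishes. The power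
equation then reads `δq i * u i ^ 2 = 0`, and at every interior node some `u` does not vanish.
-/

theorem submatrix_mulVec_comp_of_support_subset {l m n o R : Type*} [Fintype n] [Fintype o]
    [NonUnitalNonAssocSemiring R] (M : Matrix m n R) (f : l → m) {g : o → n}
    (hg : Function.Injective g) {v : n → R} (hv : Function.support v ⊆ Set.range g) :
    M.submatrix f g *ᵥ (v ∘ g) = (M *ᵥ v) ∘ f := by
  funext i
  refine Fintype.sum_of_injective g hg _ _ (fun k hk => ?_) fun _ => rfl
  rw [Function.notMem_support.mp (mt (@hv k) hk), mul_zero]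

section Linearization

variable {K : Type*} [CommRing K] [NoZeroDivisors K] [DecidableEq K]

theorem mul_add_mul_eq_sign_mul_of_power_eq_zero {q u s δq δu : K}
    (hs : s = 1 - 2 * (if u ≠ 0 then 1 else 0))
    (hpower : δq * u ^ 2 + 2 * q * δu * u = 0) :
    δq * u + q * δu = s * q * δu := by
  by_cases hu : u = 0
  · simp [hs, hu]
  · have hcancel : δq * u + 2 * q * δu = 0 :=
      (mul_eq_zero.mp (by linear_combination hpower)).resolve_right hu
    rw [if_pos hu] at hs
    linear_combination hcancel - q * δu * hs

theorem state_perturbation_eq_zero {κ : Type*} [Fintype κ] [DecidableEq κ]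
    {A : Matrix κ κ K} {q u s δq δu : κ → K}
    (hs : ∀ i, s i = 1 - 2 * (if u i ≠ 0 then 1 else 0))
    (hinj : Function.Injective (A + diagonal fun i => s i * q i).mulVec)
    (hstate : A *ᵥ δu + (fun i => δq i * u i) + (fun i => q i * δu i) = 0)
    (hpower : ∀ i, δq i * u i ^ 2 + 2 * q i * δu i * u i = 0) :
    δu = 0 := by
  refine hinj ?_
  rw [mulVec_zero, ← hstate, add_mulVec, add_assoc]
  congr 1
  funext i
  rw [mulVec_diagonal]
  exact (mul_add_mul_eq_sign_mul_of_power_eq_zero (hs i) (hpower i)).symm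

theorem real_schroedinger_linearization_injective_general {ι β κ : Type*}
    [Fintype β] [Fintype κ] [DecidableEq κ]
    (L : Matrix (β ⊕ κ) (β ⊕ κ) K) (q : κ → K) (u : ι → β ⊕ κ → K) (s : ι → κ → K)
    (hs : ∀ j i, s j i = 1 - 2 * (if u j (Sum.inr i) ≠ 0 then 1 else 0))
    (hcover : ∀ i, ∃ j, u j (Sum.inr i) ≠ 0)
    (hinj : ∀ j, Function.Injective
      (L.submatrix Sum.inr Sum.inr + diagonal fun i => s j i * q i).mulVec)
    (δq : κ → K) (δu : ι → β ⊕ κ → K)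
    (hstate : ∀ j, ((L *ᵥ δu j) ∘ Sum.inr) +
      (fun i => δq i * u j (Sum.inr i)) + (fun i => q i * δu j (Sum.inr i)) = 0)
    (hboundary : ∀ j, δu j ∘ Sum.inl = 0)
    (hpower : ∀ j i, δq i * u j (Sum.inr i) ^ 2 +
      2 * q i * δu j (Sum.inr i) * u j (Sum.inr i) = 0) :
    δq = 0 ∧ ∀ j, δu j = 0 := by
  have hinterior (j : ι) : δu j ∘ Sum.inr = 0 := by
    have hsupp : Function.support (δu j) ⊆ Set.range Sum.inr := by
      rintro (b | i) hv
      · exact absurd (congrFun (hboundary j) b) hv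
      · exact Set.mem_range_self i
    have hblock := submatrix_mulVec_comp_of_support_subset L Sum.inr Sum.inr_injective hsupp
    exact state_perturbation_eq_zero (hs j) (hinj j) (hblock ▸ hstate j) (hpower j)
  refine ⟨funext fun i => ?_, fun j => ?_⟩
  · obtain ⟨j, hj⟩ := hcover i
    have hδu : δu j (Sum.inr i) = 0 := congrFun (hinterior j) i
    have hδq : δq i * u j (Sum.inr i) ^ 2 = 0 := by simpa [hδu] using hpower j i
    exact (mul_eq_zero.mp hδq).resolve_right (pow_ne_zero 2 hj)
  · exact funext (Sum.rec (congrFun (hboundary j)) (congrFun (hinterior j)))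

end Linearization

/-- local uniqueness for the discrete inverse Schrödinger problem from
dissipated power measurements, real Schrödinger potential case. -/
theorem real_schroedinger_linearization_injective
    (head tail : E → B ⊕ I) (hloop : ∀ e, head e ≠ tail e)
    (σ : E → ℝ) (hσ : ∀ e, 0 < σ e) (q : I → ℝ)
    (N : ℕ) (u : Fin N → B ⊕ I → ℝ)
    (s : Fin N → I → ℝ)
    (hs : ∀ j i, s j i = 1 - 2 * (if u j (Sum.inr i) ≠ 0 then 1 else 0))
    (hcover : ∀ i : I, ∃ j, u j (Sum.inr i) ≠ 0)
    (hinv : IsUnit ((dLap ℝ head tail σ).submatrix Sum.inr Sum.inr + Matrix.diagonal q))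
    (hinvs : ∀ j, IsUnit ((dLap ℝ head tail σ).submatrix Sum.inr Sum.inr +
      Matrix.diagonal (fun i => s j i * q i)))
    (δq : I → ℝ) (δu : Fin N → B ⊕ I → ℝ)
    (h1 : ∀ j, ((dLap ℝ head tail σ *ᵥ δu j) ∘ Sum.inr) +
      (fun i => δq i * u j (Sum.inr i)) + (fun i => q i * δu j (Sum.inr i)) = 0)
    (h2 : ∀ j, δu j ∘ Sum.inl = 0)
    (h3 : ∀ j i, δq i * (u j (Sum.inr i)) ^ 2 +
      2 * q i * δu j (Sum.inr i) * u j (Sum.inr i) = 0) :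
    δq = 0 ∧ ∀ j, δu j = 0 :=
  real_schroedinger_linearization_injective_general _ q u s hs hcover
    (fun j => mulVec_injective_of_isUnit (hinvs j)) δq δu h1 h2 h3
end
end

section
/- Let σ : ℰ → ℝ, q : ℐ → ℝ, and u : 𝒱 → ℝ, and set s := 1 − 2·1_{supp u_ℐ}. Suppose δq : ℐ → ℝ and δu : 𝒱 → ℝ satisfy (L_σ δu)_ℐ + δq ⊙ u_ℐ + q ⊙ δu_ℐ = 0, (δu)_ℬ = 0, and δq ⊙ |u_ℐ|² + 2q ⊙ δu_ℐ ⊙ u_ℐ = 0. Then: (a) δq ⊙ 1_{supp u_ℐ} = −2 (u_ℐ)† ⊙ q ⊙ δu_ℐ, and (b) ((L_σ)_ℐℐ + diag(s ⊙ q)) δu_ℐ = 0. -/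
open Matrix

noncomputable section

variable {E B I : Type*} [Fintype E] [Fintype B] [Fintype I]
  [DecidableEq E] [DecidableEq B] [DecidableEq I]

/-!
Cancelling one factor of `u` in the linearized power-density equation gives
`δq ⊙ u_ℐ = -2 · 1_{supp u_ℐ} ⊙ q ⊙ δu_ℐ`. Dividing by `u` on its support is (a). Substituting into
the linearized Schrödinger equation turns its potential term into `s ⊙ q ⊙ δu_ℐ`, and since `δu`
vanishes on the boundary only the interior block of the Laplacian acts on it, which is (b).
-/

theorem mulVec_comp_eq_submatrix_inr_mulVec {R k l m n : Type*} [NonUnitalNonAssocSemiring R]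
    [Fintype m] [Fintype n] (M : Matrix k (m ⊕ n) R) (f : l → k) {v : m ⊕ n → R}
    (hv : v ∘ Sum.inl = 0) :
    (M *ᵥ v) ∘ f = M.submatrix f Sum.inr *ᵥ (v ∘ Sum.inr) := by
  have hv_inl (j : m) : v (Sum.inl j) = 0 := congrFun hv j
  ext i
  simp [mulVec, dotProduct, Fintype.sum_sum_type, hv_inl]

theorem mul_eq_ite_of_mul_sq_add_mul_eq_zero {R : Type*} [Ring R] [NoZeroDivisors R]
    [DecidableEq R] {a c x : R} (h : a * x ^ 2 + c * x = 0) :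
    a * x = if x ≠ 0 then -c else 0 := by
  have h_factor : (a * x + c) * x = 0 := by rwa [add_mul, mul_assoc, ← sq]
  split_ifs with hx
  · exact eq_neg_of_add_eq_zero_left ((mul_eq_zero.mp h_factor).resolve_right hx)
  · rw [not_not.mp hx, mul_zero]

theorem mul_ite_eq_of_mul_sq_add_mul_eq_zero {K : Type*} [DivisionRing K] [DecidableEq K]
    {a c x : K} (h : a * x ^ 2 + c * x = 0) :
    a * (if x ≠ 0 then 1 else 0) = -c * (if x ≠ 0 then x⁻¹ else 0) := by
  have h_mul := mul_eq_ite_of_mul_sq_add_mul_eq_zero h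
  split_ifs at h_mul ⊢ with hx
  · rw [mul_one, eq_mul_inv_iff_mul_eq₀ hx, h_mul]
  · rw [mul_zero, mul_zero]

theorem real_schroedinger_linearization_identities_general
    {K β ι : Type*} [Field K] [DecidableEq K] [Fintype β] [Fintype ι] [DecidableEq ι]
    (L : Matrix (β ⊕ ι) (β ⊕ ι) K) (q : ι → K) (u : β ⊕ ι → K)
    (s : ι → K)
    (hs : ∀ i, s i = 1 - 2 * (if u (Sum.inr i) ≠ 0 then 1 else 0))
    (δq : ι → K) (δu : β ⊕ ι → K)
    (h_schroedinger : ((L *ᵥ δu) ∘ Sum.inr) +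
      (fun i => δq i * u (Sum.inr i)) + (fun i => q i * δu (Sum.inr i)) = 0)
    (h_boundary : δu ∘ Sum.inl = 0)
    (h_power : ∀ i, δq i * (u (Sum.inr i)) ^ 2 +
      2 * q i * δu (Sum.inr i) * u (Sum.inr i) = 0) :
    (∀ i, δq i * (if u (Sum.inr i) ≠ 0 then 1 else 0) =
      -2 * (if u (Sum.inr i) ≠ 0 then (u (Sum.inr i))⁻¹ else 0) * q i * δu (Sum.inr i)) ∧
    (L.submatrix Sum.inr Sum.inr +
        Matrix.diagonal (fun i => s i * q i)) *ᵥ (δu ∘ Sum.inr) = 0 := by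
  constructor
  · intro i
    rw [mul_ite_eq_of_mul_sq_add_mul_eq_zero (h_power i)]
    ring
  · have h_potential (i : ι) :
        s i * q i * δu (Sum.inr i) = δq i * u (Sum.inr i) + q i * δu (Sum.inr i) := by
      rw [hs i, mul_eq_ite_of_mul_sq_add_mul_eq_zero (h_power i)]
      split_ifs <;> ring
    rw [add_mulVec, ← mulVec_comp_eq_submatrix_inr_mulVec L Sum.inr h_boundary,
      ← h_schroedinger, add_assoc]
    congr 1
    ext i
    rw [mulVec_diagonal, Function.comp_apply, h_potential i, Pi.add_apply]

/-- key identities in the proof of local uniqueness for the real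
Schrödinger problem: (a) `δq ⊙ 1_{supp u_ℐ} = -2 (u_ℐ)† ⊙ q ⊙ δu_ℐ` and
(b) `((L_σ)_ℐℐ + diag(s ⊙ q)) δu_ℐ = 0`, where `s = 1 - 2·1_{supp u_ℐ}`. -/
theorem real_schroedinger_linearization_identities
    (head tail : E → B ⊕ I) (hloop : ∀ e, head e ≠ tail e)
    (σ : E → ℝ) (q : I → ℝ) (u : B ⊕ I → ℝ)
    (s : I → ℝ)
    (hs : ∀ i, s i = 1 - 2 * (if u (Sum.inr i) ≠ 0 then 1 else 0))
    (δq : I → ℝ) (δu : B ⊕ I → ℝ)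
    (h1 : ((dLap ℝ head tail σ *ᵥ δu) ∘ Sum.inr) +
      (fun i => δq i * u (Sum.inr i)) + (fun i => q i * δu (Sum.inr i)) = 0)
    (h2 : δu ∘ Sum.inl = 0)
    (h3 : ∀ i, δq i * (u (Sum.inr i)) ^ 2 +
      2 * q i * δu (Sum.inr i) * u (Sum.inr i) = 0) :
    (∀ i, δq i * (if u (Sum.inr i) ≠ 0 then 1 else 0) =
      -2 * (if u (Sum.inr i) ≠ 0 then (u (Sum.inr i))⁻¹ else 0) * q i * δu (Sum.inr i)) ∧
    ((dLap ℝ head tail σ).submatrix Sum.inr Sum.inr +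
        Matrix.diagonal (fun i => s i * q i)) *ᵥ (δu ∘ Sum.inr) = 0 :=
  real_schroedinger_linearization_identities_general (dLap ℝ head tail σ) q u s hs δq δu h1 h2 h3
end
end
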